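/- Fix γ ∈ (1,2), Φ_ℓ, Φ_r ∈ ℝ and an integer n ≥ 2. Let Φ_ss^n be the unique solution of the discrete stationary equation and μ_ss^n the associated Gaussian product measure. Then μ_ss^n is infinitesimally invariant for the boundary-driven long-range Ginzburg–Landau generator: for every smooth compactly supported f : ℝ^{Λ_n} → ℝ, ∫ 𝓛_n f dμ_ss^n = 0. -/

import Mathlib

open MeasureTheory Filter ENNReal NNReal

noncomputable section

/-- The normalizing constant `c_γ = (∑_{z∈ℤ, z≠0} |z|^{-(1+γ)})⁻¹`. -/
def cGamma (γ : ℝ) : ℝ := (∑' z : ℤ, if z = 0 then (0:ℝ) else |(z : ℝ)| ^ (-(1 + γ)))⁻¹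

/-- The long-range kernel `p(z) = c_γ |z|^{-(1+γ)}` for `z ≠ 0`, `p(0) = 0`. -/
def pker (γ : ℝ) (z : ℝ) : ℝ := if z = 0 then 0 else cGamma γ * |z| ^ (-(1 + γ))

/-- The discrete lattice `Λ_n = {1, …, n−1}`. -/
abbrev Lam (n : ℕ) : Finset ℕ := Finset.Icc 1 (n - 1)

/-- The configuration space `ℝ^{Λ_n}`. -/
abbrev Conf (n : ℕ) := (↥(Lam n) → ℝ)

/-- The partial derivative `∂_{φ(k)} f` (with value `0` for `k ∉ Λ_n`). -/
def pdN (n : ℕ) (k : ℕ) (f : Conf n → ℝ) (φ : Conf n) : ℝ :=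
  if h : k ∈ Lam n then deriv (fun a => f (Function.update φ ⟨k, h⟩ a)) (φ ⟨k, h⟩) else 0

/-- The coordinate `φ(k)` (with value `0` for `k ∉ Λ_n`). -/
def coordN (n : ℕ) (k : ℕ) (φ : Conf n) : ℝ := if h : k ∈ Lam n then φ ⟨k, h⟩ else 0

/-- The bulk part of the Ginzburg–Landau generator. -/
def GLbulk (γ : ℝ) (n : ℕ) (f : Conf n → ℝ) (φ : Conf n) : ℝ :=
  (1/2) * ∑ x ∈ Lam n, ∑ y ∈ Lam n, pker γ ((y : ℝ) - (x : ℝ)) *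
    ((coordN n x φ - coordN n y φ) * (pdN n y f φ - pdN n x f φ)
      + (pdN n y (pdN n y f) φ - pdN n y (pdN n x f) φ
          - pdN n x (pdN n y f) φ + pdN n x (pdN n x f) φ))

/-- The left boundary part of the Ginzburg–Landau generator. -/
def GLleft (Φl : ℝ) (n : ℕ) (f : Conf n → ℝ) (φ : Conf n) : ℝ :=
  pdN n 1 (pdN n 1 f) φ + (Φl - coordN n 1 φ) * pdN n 1 f φ

/-- The right boundary part of the Ginzburg–Landau generator. -/
def GLright (Φr : ℝ) (n : ℕ) (f : Conf n → ℝ) (φ : Conf n) : ℝ :=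
  pdN n (n - 1) (pdN n (n - 1) f) φ + (Φr - coordN n (n - 1) φ) * pdN n (n - 1) f φ

/-- The boundary-driven long-range Ginzburg–Landau generator
`𝓛_n = n^γ (𝓛^ℓ + 𝓛^r + 𝓛^{bulk})`. -/
def GLgen (γ Φl Φr : ℝ) (n : ℕ) (f : Conf n → ℝ) (φ : Conf n) : ℝ :=
  (n : ℝ) ^ γ * (GLleft Φl n f φ + GLright Φr n f φ + GLbulk γ n f φ)

/-- The Gaussian product measure on `ℝ^{Λ_n}` with unit variances and mean `m x` at
coordinate `x`. -/
def gaussianProduct (n : ℕ) (m : ℕ → ℝ) : Measure (Conf n) :=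
  Measure.pi fun x => ProbabilityTheory.gaussianReal (m (x : ℕ)) 1

/-- The discrete stationary equation for the profile `ψ` on `Λ_n = {1, …, n−1}`. -/
def IsDiscreteProfile (γ Φl Φr : ℝ) (n : ℕ) (ψ : ℕ → ℝ) : Prop :=
  ∀ x ∈ Lam n,
    (∑ y ∈ Lam n, pker γ ((y : ℝ) - (x : ℝ)) * (ψ y - ψ x))
      + (if x = 1 then Φl - ψ 1 else 0) + (if x = n - 1 then Φr - ψ (n - 1) else 0) = 0

open ProbabilityTheory

/-!
Write `∂ᵤ` for the derivative in direction `u`. Both ingredients of the generator are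
Ornstein–Uhlenbeck operators `∂ᵤ² + (b - u ⬝ᵥ φ) ∂ᵤ`: the exchange between `x` and `y` is the
direction `u = e_y - e_x` with `b = 0`, a reservoir at `x` is the direction `u = e_x` with `b` the
level of the reservoir. Gaussian integration by parts shows that such an operator integrates to
`(b - u ⬝ᵥ ψ) ∫ ∂ᵤ f` under the unit-variance Gaussian product measure with mean `ψ`. Since
`∫ ∂ᵤ f` is linear in `u`, the integral of the whole generator is the stationary equation for `ψ`
tested against the function `x ↦ ∫ ∂_{e_x} f`.
-/

section FDerivApply

lemma contDiff_fderiv_apply_const {𝕜 E F : Type*} [NontriviallyNormedField 𝕜]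
    [NormedAddCommGroup E] [NormedSpace 𝕜 E] [NormedAddCommGroup F] [NormedSpace 𝕜 F]
    {k l : WithTop ℕ∞} {f : E → F} (hf : ContDiff 𝕜 l f) (hkl : k + 1 ≤ l) (u : E) :
    ContDiff 𝕜 k fun x ↦ fderiv 𝕜 f x u :=
  (hf.fderiv_right hkl).clm_apply contDiff_const

variable {E : Type*} [NormedAddCommGroup E] [NormedSpace ℝ E] [MeasurableSpace E]
  [OpensMeasurableSpace E] {μ : Measure E} [IsFiniteMeasureOnCompacts μ]

lemma integrable_mul_fderiv_apply {h f : E → ℝ} (hh : Continuous h) (hf : ContDiff ℝ 1 f)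
    (hsupp : HasCompactSupport f) (u : E) : Integrable (fun x ↦ h x * fderiv ℝ f x u) μ :=
  (hh.mul ((hf.continuous_fderiv one_ne_zero).clm_apply
    continuous_const)).integrable_of_hasCompactSupport (hsupp.fderiv_apply ℝ u).mul_left

lemma integrable_fderiv_apply {f : E → ℝ} (hf : ContDiff ℝ 1 f) (hsupp : HasCompactSupport f)
    (u : E) : Integrable (fun x ↦ fderiv ℝ f x u) μ := by
  simpa only [one_mul] using
    integrable_mul_fderiv_apply (μ := μ) (continuous_const (y := 1)) hf hsupp u

end FDerivApply

section GaussianProduct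

lemma contDiff_gaussianPDFReal {k : WithTop ℕ∞} (μ : ℝ) (v : ℝ≥0) :
    ContDiff ℝ k (gaussianPDFReal μ v) := by
  rw [gaussianPDFReal_def]
  fun_prop

lemma hasDerivAt_gaussianPDFReal (μ : ℝ) (v : ℝ≥0) (x : ℝ) :
    HasDerivAt (gaussianPDFReal μ v) (-((x - μ) / v) * gaussianPDFReal μ v x) x := by
  have hexponent : HasDerivAt (fun t : ℝ ↦ -(t - μ) ^ 2 / (2 * v)) (-((x - μ) / v)) x := by
    refine ((((hasDerivAt_id x).sub_const μ).pow 2).neg.div_const (2 * (v : ℝ))).congr_deriv ?_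
    rw [← mul_div_mul_left (x - μ) (v : ℝ) two_ne_zero]
    simp [neg_div]
  rw [gaussianPDFReal_def]
  exact (hexponent.exp.const_mul _).congr_deriv (by ring)

variable {ι : Type*} [Fintype ι]

/-- The joint density, with respect to Lebesgue measure on `ι → ℝ`, of independent Gaussian
coordinates with means `m i` and variances `v i`. -/
def gaussianPiPDFReal (m : ι → ℝ) (v : ι → ℝ≥0) (φ : ι → ℝ) : ℝ :=
  ∏ i, gaussianPDFReal (m i) (v i) (φ i)

lemma gaussianPiPDFReal_nonneg (m : ι → ℝ) (v : ι → ℝ≥0) (φ : ι → ℝ) :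
    0 ≤ gaussianPiPDFReal m v φ :=
  Finset.prod_nonneg fun _ _ ↦ gaussianPDFReal_nonneg _ _ _

lemma contDiff_gaussianPiPDFReal {k : WithTop ℕ∞} (m : ι → ℝ) (v : ι → ℝ≥0) :
    ContDiff ℝ k (gaussianPiPDFReal m v) :=
  contDiff_prod fun i _ ↦ (contDiff_gaussianPDFReal (m i) (v i)).comp (contDiff_apply ℝ ℝ i)

lemma fderiv_gaussianPiPDFReal_apply (m : ι → ℝ) (v : ι → ℝ≥0) (φ u : ι → ℝ) :
    fderiv ℝ (gaussianPiPDFReal m v) φ u =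
      -((∑ i, u i * ((φ i - m i) / v i)) * gaussianPiPDFReal m v φ) := by
  classical
  have hfactor (i : ι) := (hasDerivAt_gaussianPDFReal (m i) (v i) (φ i)).comp_hasFDerivAt
    (f := fun φ : ι → ℝ ↦ φ i) φ (hasFDerivAt_apply (𝕜 := ℝ) i φ)
  have hderiv : HasFDerivAt (gaussianPiPDFReal m v) _ φ :=
    HasFDerivAt.finsetProd fun i _ ↦ hfactor i
  rw [hderiv.fderiv, Finset.sum_mul, ← Finset.sum_neg_distrib, sum_apply]
  refine Finset.sum_congr rfl fun i hi ↦ ?_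
  rw [gaussianPiPDFReal, ← Finset.mul_prod_erase _ _ hi]
  simp only [smul_apply, ContinuousLinearMap.proj_apply, smul_eq_mul]
  ring

lemma pi_gaussianReal_eq_withDensity (m : ι → ℝ) {v : ι → ℝ≥0} (hv : ∀ i, v i ≠ 0) :
    Measure.pi (fun i ↦ gaussianReal (m i) (v i)) =
      volume.withDensity fun φ ↦ ENNReal.ofReal (gaussianPiPDFReal m v φ) := by
  refine Measure.pi_eq fun s hs ↦ ?_
  have hint : Integrable (gaussianPiPDFReal m v)
      (Measure.pi fun i ↦ volume.restrict (s i)) :=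
    Integrable.fintype_prod fun i ↦ (integrable_gaussianPDFReal (m i) (v i)).restrict
  rw [withDensity_apply _ (MeasurableSet.univ_pi hs), volume_pi, Measure.restrict_pi_pi,
    ← ofReal_integral_eq_lintegral_ofReal hint (ae_of_all _ (gaussianPiPDFReal_nonneg m v))]
  simp_rw [gaussianPiPDFReal]
  rw [integral_fintype_prod_eq_prod (𝕜 := ℝ) fun i x ↦ gaussianPDFReal (m i) (v i) x,
    ENNReal.ofReal_prod_of_nonneg fun i _ ↦
      integral_nonneg fun x ↦ gaussianPDFReal_nonneg (m i) (v i) x]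
  exact Finset.prod_congr rfl fun i _ ↦ (gaussianReal_apply_eq_integral (m i) (hv i) (s i)).symm

lemma integral_pi_gaussianReal_eq_integral_smul {E : Type*} [NormedAddCommGroup E]
    [NormedSpace ℝ E] (m : ι → ℝ) {v : ι → ℝ≥0} (hv : ∀ i, v i ≠ 0) (g : (ι → ℝ) → E) :
    ∫ φ, g φ ∂Measure.pi (fun i ↦ gaussianReal (m i) (v i)) =
      ∫ φ, gaussianPiPDFReal m v φ • g φ := by
  have hmeas : Measurable (gaussianPiPDFReal m v) :=
    (contDiff_gaussianPiPDFReal (k := 0) m v).continuous.measurable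
  rw [pi_gaussianReal_eq_withDensity m hv, integral_withDensity_eq_integral_toReal_smul
    hmeas.ennreal_ofReal (ae_of_all _ fun _ ↦ ENNReal.ofReal_lt_top)]
  simp only [ENNReal.toReal_ofReal (gaussianPiPDFReal_nonneg m v _)]

theorem integral_pi_gaussianReal_fderiv_apply (m : ι → ℝ) {v : ι → ℝ≥0} (hv : ∀ i, v i ≠ 0)
    {g : (ι → ℝ) → ℝ} (hg : ContDiff ℝ 1 g) (hsupp : HasCompactSupport g) (u : ι → ℝ) :
    ∫ φ, fderiv ℝ g φ u ∂Measure.pi (fun i ↦ gaussianReal (m i) (v i)) =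
      ∫ φ, (∑ i, u i * ((φ i - m i) / v i)) * g φ
        ∂Measure.pi (fun i ↦ gaussianReal (m i) (v i)) := by
  have hρ : ContDiff ℝ 1 (gaussianPiPDFReal m v) := contDiff_gaussianPiPDFReal m v
  have hρ' : Continuous fun φ ↦ fderiv ℝ (gaussianPiPDFReal m v) φ u :=
    (hρ.continuous_fderiv one_ne_zero).clm_apply continuous_const
  simp only [integral_pi_gaussianReal_eq_integral_smul m hv, smul_eq_mul]
  rw [integral_mul_fderiv_eq_neg_fderiv_mul_of_integrable
    ((hρ'.mul hg.continuous).integrable_of_hasCompactSupport hsupp.mul_left)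
    (integrable_mul_fderiv_apply hρ.continuous hg hsupp u)
    ((hρ.continuous.mul hg.continuous).integrable_of_hasCompactSupport hsupp.mul_left)
    (fun φ _ ↦ hρ.differentiable one_ne_zero φ) (fun φ _ ↦ hg.differentiable one_ne_zero φ),
    ← integral_neg]
  refine integral_congr_ae (ae_of_all _ fun φ ↦ ?_)
  simp only [fderiv_gaussianPiPDFReal_apply]
  ring

end GaussianProduct

section OrnsteinUhlenbeck

variable {ι : Type*} [Fintype ι] {f : (ι → ℝ) → ℝ}

/-- The Ornstein–Uhlenbeck operator `∂ᵤ² + (b - u ⬝ᵥ φ) ∂ᵤ`, which diffuses in the single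
direction `u` and drives `u ⬝ᵥ φ` towards `b`. -/
def ouOperator (u : ι → ℝ) (b : ℝ) (f : (ι → ℝ) → ℝ) (φ : ι → ℝ) : ℝ :=
  fderiv ℝ (fun ξ ↦ fderiv ℝ f ξ u) φ u + (b - u ⬝ᵥ φ) * fderiv ℝ f φ u

lemma integrable_ouOperator {μ : Measure (ι → ℝ)} [IsFiniteMeasureOnCompacts μ]
    (hf : ContDiff ℝ 2 f) (hsupp : HasCompactSupport f) (u : ι → ℝ) (b : ℝ) :
    Integrable (ouOperator u b f) μ :=
  (integrable_fderiv_apply (contDiff_fderiv_apply_const hf one_add_one_eq_two.le u)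
    (hsupp.fderiv_apply ℝ u) u).add
    (integrable_mul_fderiv_apply (by fun_prop) (hf.of_le one_le_two) hsupp u)

theorem integral_ouOperator (m : ι → ℝ) (hf : ContDiff ℝ 2 f) (hsupp : HasCompactSupport f)
    (u : ι → ℝ) (b : ℝ) :
    ∫ φ, ouOperator u b f φ ∂Measure.pi (fun i ↦ gaussianReal (m i) 1) =
      (b - u ⬝ᵥ m) * ∫ φ, fderiv ℝ f φ u ∂Measure.pi (fun i ↦ gaussianReal (m i) 1) := by
  have hf' : ContDiff ℝ 1 fun φ ↦ fderiv ℝ f φ u :=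
    contDiff_fderiv_apply_const hf one_add_one_eq_two.le u
  have hsupp' : HasCompactSupport fun φ ↦ fderiv ℝ f φ u := hsupp.fderiv_apply ℝ u
  have hdrift (c : ℝ) : Integrable (fun φ ↦ (c - u ⬝ᵥ φ) * fderiv ℝ f φ u)
      (Measure.pi fun i ↦ gaussianReal (m i) 1) :=
    integrable_mul_fderiv_apply (by fun_prop) (hf.of_le one_le_two) hsupp u
  have hparts : ∫ φ, fderiv ℝ (fun ξ ↦ fderiv ℝ f ξ u) φ u
        ∂Measure.pi (fun i ↦ gaussianReal (m i) 1) =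
      -∫ φ, (u ⬝ᵥ m - u ⬝ᵥ φ) * fderiv ℝ f φ u ∂Measure.pi (fun i ↦ gaussianReal (m i) 1) := by
    rw [integral_pi_gaussianReal_fderiv_apply m (fun _ ↦ one_ne_zero) hf' hsupp' u, ← integral_neg]
    simp only [dotProduct, NNReal.coe_one, div_one, mul_sub, Finset.sum_sub_distrib, ← neg_mul,
      neg_sub]
  simp only [ouOperator]
  rw [integral_add (integrable_fderiv_apply hf' hsupp' u) (hdrift b), hparts, neg_add_eq_sub,
    ← integral_sub (hdrift b) (hdrift _), ← integral_const_mul]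
  exact integral_congr_ae (ae_of_all _ fun φ ↦ by ring)

end OrnsteinUhlenbeck

section GinzburgLandau

lemma sum_sum_mul_sub_mul_sub {ι R : Type*} [Fintype ι] [CommRing R] {p : ι → ι → R}
    (hp : ∀ x y, p x y = p y x) (ψ a : ι → R) :
    ∑ x, ∑ y, p x y * ((ψ x - ψ y) * (a y - a x)) =
      2 * ∑ x, (∑ y, p x y * (ψ y - ψ x)) * a x := by
  have hswap : ∑ x, ∑ y, p x y * (ψ x - ψ y) * a y = ∑ x, ∑ y, p x y * (ψ y - ψ x) * a x := by
    rw [Finset.sum_comm]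
    simp only [hp]
  calc
    _ = ∑ x, ∑ y, p x y * (ψ x - ψ y) * a y + ∑ x, ∑ y, p x y * (ψ y - ψ x) * a x := by
      simp only [← Finset.sum_add_distrib]
      exact Finset.sum_congr rfl fun x _ ↦ Finset.sum_congr rfl fun y _ ↦ by ring
    _ = _ := by simp only [hswap, two_mul, Finset.sum_mul]

variable {ι κ : Type*} [Fintype ι] [DecidableEq ι] [Fintype κ]

/-- The Ginzburg–Landau generator on a finite set `ι` of sites, exchanging charge between `x` and
`y` at rate `p x y`, with reservoirs indexed by `κ`: the reservoir `k`, of level `Φ k`, is attached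
to the site `s k`. Several reservoirs may share a site,
as happens for `Λ_2 = {1}`. -/
def glGenerator (p : ι → ι → ℝ) (s : κ → ι) (Φ : κ → ℝ) (f : (ι → ℝ) → ℝ) (φ : ι → ℝ) : ℝ :=
  ∑ k, ouOperator (Pi.single (s k) 1) (Φ k) f φ +
    (1 / 2) * ∑ x, ∑ y, p x y * ouOperator (Pi.single y 1 - Pi.single x 1) 0 f φ

/-- The stationary equation for the mean profile `ψ` of the dynamics generated by
`glGenerator p s Φ`. -/
def IsStationaryProfile (p : ι → ι → ℝ) (s : κ → ι) (Φ : κ → ℝ) (ψ : ι → ℝ) : Prop :=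
  ∀ x, ∑ y, p x y * (ψ y - ψ x) + ∑ k, (if x = s k then Φ k - ψ x else 0) = 0

lemma IsStationaryProfile.sum_mul_eq_zero {p : ι → ι → ℝ} {s : κ → ι} {Φ : κ → ℝ} {ψ : ι → ℝ}
    (hψ : IsStationaryProfile p s Φ ψ) (hp : ∀ x y, p x y = p y x) (a : ι → ℝ) :
    ∑ k, (Φ k - ψ (s k)) * a (s k) +
      (1 / 2) * ∑ x, ∑ y, p x y * ((ψ x - ψ y) * (a y - a x)) = 0 := by
  have htested : ∑ x, (∑ y, p x y * (ψ y - ψ x) +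
      ∑ k, (if x = s k then Φ k - ψ x else 0)) * a x = 0 :=
    Finset.sum_eq_zero fun x _ ↦ by rw [hψ x, zero_mul]
  have hreservoir : ∑ x, (∑ k, (if x = s k then Φ k - ψ x else 0)) * a x =
      ∑ k, (Φ k - ψ (s k)) * a (s k) := by
    simp only [Finset.sum_mul, ite_mul, zero_mul]
    rw [Finset.sum_comm]
    simp only [Finset.sum_ite_eq', Finset.mem_univ, if_true]
  simp only [add_mul, Finset.sum_add_distrib, hreservoir] at htested
  rw [sum_sum_mul_sub_mul_sub hp]
  linarith

/-- The mean of the partial derivative of `f` at the site `x` under the unit-variance Gaussian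
product measure with mean `ψ`. -/
def meanPartialDeriv (ψ : ι → ℝ) (f : (ι → ℝ) → ℝ) (x : ι) : ℝ :=
  ∫ φ, fderiv ℝ f φ (Pi.single x 1) ∂Measure.pi (fun i ↦ gaussianReal (ψ i) 1)

lemma integral_glGenerator (p : ι → ι → ℝ) (s : κ → ι) (Φ : κ → ℝ) (ψ : ι → ℝ)
    {f : (ι → ℝ) → ℝ} (hf : ContDiff ℝ 2 f) (hsupp : HasCompactSupport f) :
    ∫ φ, glGenerator p s Φ f φ ∂Measure.pi (fun i ↦ gaussianReal (ψ i) 1) =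
      ∑ k, (Φ k - ψ (s k)) * meanPartialDeriv ψ f (s k) + (1 / 2) * ∑ x, ∑ y,
        p x y * ((ψ x - ψ y) * (meanPartialDeriv ψ f y - meanPartialDeriv ψ f x)) := by
  have hint (u : ι → ℝ) (b : ℝ) : Integrable (ouOperator u b f)
      (Measure.pi fun i ↦ gaussianReal (ψ i) 1) := integrable_ouOperator hf hsupp u b
  have hbond (x y : ι) := (hint (Pi.single y 1 - Pi.single x 1) 0).const_mul (p x y)
  have hbonds (x : ι) := integrable_finsetSum Finset.univ fun y _ ↦ hbond x y
  have hderiv (x : ι) := integrable_fderiv_apply (μ := Measure.pi fun i ↦ gaussianReal (ψ i) 1)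
    (hf.of_le one_le_two) hsupp (Pi.single x 1)
  simp only [glGenerator]
  rw [integral_add (integrable_finsetSum _ fun k _ ↦ hint _ _)
      ((integrable_finsetSum _ fun x _ ↦ hbonds x).const_mul _),
    integral_finsetSum _ fun k _ ↦ hint _ _, integral_const_mul,
    integral_finsetSum _ fun x _ ↦ hbonds x]
  simp only [integral_finsetSum _ fun y _ ↦ hbond _ y, integral_const_mul,
    integral_ouOperator ψ hf hsupp, map_sub, integral_sub (hderiv _) (hderiv _), sub_dotProduct,
    single_one_dotProduct, zero_sub, neg_sub, meanPartialDeriv]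

theorem NESS_infinitesimally_invariant_general {p : ι → ι → ℝ} (hp : ∀ x y, p x y = p y x)
    {s : κ → ι} {Φ : κ → ℝ} {ψ : ι → ℝ} (hψ : IsStationaryProfile p s Φ ψ)
    {f : (ι → ℝ) → ℝ} (hf : ContDiff ℝ 2 f) (hsupp : HasCompactSupport f) :
    ∫ φ, glGenerator p s Φ f φ ∂Measure.pi (fun i ↦ gaussianReal (ψ i) 1) = 0 :=
  (integral_glGenerator p s Φ ψ hf hsupp).trans (hψ.sum_mul_eq_zero hp _)

end GinzburgLandau

section Lattice

variable {n : ℕ} {f : Conf n → ℝ}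

lemma pker_sub_comm (γ a b : ℝ) : pker γ (a - b) = pker γ (b - a) := by
  simp only [pker, sub_eq_zero, abs_sub_comm a b, eq_comm (a := a)]

lemma coordN_coe (x : Lam n) (φ : Conf n) : coordN n x φ = φ x :=
  dif_pos x.2

lemma pdN_eq_fderiv (hf : Differentiable ℝ f) (x : Lam n) :
    pdN n x f = fun φ ↦ fderiv ℝ f φ (Pi.single x 1) := by
  funext φ
  have hf' : HasFDerivAt f (fderiv ℝ f φ) (Function.update φ x (φ x)) := by
    rw [Function.update_eq_self]
    exact (hf φ).hasFDerivAt
  rw [pdN, dif_pos x.2]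
  exact (hf'.comp_hasDerivAt _ (hasDerivAt_update φ x (φ x))).deriv

lemma pdN_pdN_eq_fderiv (hf : ContDiff ℝ 2 f) (x y : Lam n) (φ : Conf n) :
    pdN n y (pdN n x f) φ =
      fderiv ℝ (fun ξ ↦ fderiv ℝ f ξ (Pi.single x 1)) φ (Pi.single y 1) := by
  have hf' : ContDiff ℝ 1 fun ξ ↦ fderiv ℝ f ξ (Pi.single x 1) :=
    contDiff_fderiv_apply_const hf one_add_one_eq_two.le _
  rw [pdN_eq_fderiv (hf.differentiable two_ne_zero) x,
    pdN_eq_fderiv (hf'.differentiable one_ne_zero) y]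

lemma ouOperator_single (hf : ContDiff ℝ 2 f) (x : Lam n) (b : ℝ) (φ : Conf n) :
    ouOperator (Pi.single x 1) b f φ =
      pdN n x (pdN n x f) φ + (b - coordN n x φ) * pdN n x f φ := by
  rw [ouOperator, pdN_pdN_eq_fderiv hf, pdN_eq_fderiv (hf.differentiable two_ne_zero), coordN_coe,
    single_one_dotProduct]

lemma ouOperator_single_sub_single (hf : ContDiff ℝ 2 f) (x y : Lam n) (φ : Conf n) :
    ouOperator (Pi.single y 1 - Pi.single x 1) 0 f φ =
      (coordN n x φ - coordN n y φ) * (pdN n y f φ - pdN n x f φ)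
        + (pdN n y (pdN n y f) φ - pdN n y (pdN n x f) φ
          - pdN n x (pdN n y f) φ + pdN n x (pdN n x f) φ) := by
  have hdiff (z : Lam n) : DifferentiableAt ℝ (fun ξ ↦ fderiv ℝ f ξ (Pi.single z 1)) φ :=
    (contDiff_fderiv_apply_const hf one_add_one_eq_two.le _).differentiable one_ne_zero φ
  simp only [pdN_pdN_eq_fderiv hf]
  simp only [ouOperator, pdN_eq_fderiv (hf.differentiable two_ne_zero), coordN_coe, map_sub,
    fderiv_fun_sub (hdiff y) (hdiff x), sub_apply, sub_dotProduct, single_one_dotProduct]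
  ring

/-- The two end points `1` and `n - 1` of `Λ_n`, to which the reservoirs are attached. -/
def endpoint (hn : 2 ≤ n) : Fin 2 → Lam n :=
  ![⟨1, Finset.mem_Icc.2 (by lia)⟩, ⟨n - 1, Finset.mem_Icc.2 (by lia)⟩]

lemma GLgen_eq_glGenerator (γ Φl Φr : ℝ) (hn : 2 ≤ n) (hf : ContDiff ℝ 2 f) (φ : Conf n) :
    GLgen γ Φl Φr n f φ = (n : ℝ) ^ γ *
      glGenerator (fun x y : Lam n ↦ pker γ ((y : ℝ) - x)) (endpoint hn) ![Φl, Φr] f φ := by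
  simp only [glGenerator, ouOperator_single hf, ouOperator_single_sub_single hf, Fin.sum_univ_two]
  simp only [GLgen, GLbulk, ← Finset.sum_coe_sort (Lam n)]
  rfl

lemma IsDiscreteProfile.isStationaryProfile {γ Φl Φr : ℝ} (hn : 2 ≤ n) {ψ : ℕ → ℝ}
    (hψ : IsDiscreteProfile γ Φl Φr n ψ) :
    IsStationaryProfile (fun x y : Lam n ↦ pker γ ((y : ℝ) - x)) (endpoint hn) ![Φl, Φr]
      fun x ↦ ψ x := by
  intro x
  have hreservoir (z : Lam n) (c : ℝ) :
      (if x = z then c - ψ x else 0) = if (x : ℕ) = z then c - ψ z else 0 := by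
    by_cases hxz : x = z
    · rw [if_pos hxz, if_pos (congrArg _ hxz), hxz]
    · rw [if_neg hxz, if_neg (Subtype.coe_injective.ne hxz)]
  simp only [Fin.sum_univ_two, hreservoir, ← add_assoc]
  rw [Finset.sum_coe_sort (Lam n) fun y ↦ pker γ ((y : ℝ) - x) * (ψ y - ψ x)]
  exact hψ x x.2

end Lattice

/-- The Gaussian product measure built on the discrete stationary profile
is infinitesimally invariant for the boundary-driven long-range Ginzburg–Landau generator. -/
theorem NESS_infinitesimally_invariant
    (γ Φl Φr : ℝ) (hγ : γ ∈ Set.Ioo (1:ℝ) 2)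
    (n : ℕ) (hn : 2 ≤ n)
    (ψ : ℕ → ℝ) (hψ : IsDiscreteProfile γ Φl Φr n ψ)
    (f : Conf n → ℝ) (hf : ContDiff ℝ (⊤ : ℕ∞) f) (hsupp : HasCompactSupport f) :
    ∫ φ, GLgen γ Φl Φr n f φ ∂(gaussianProduct n ψ) = 0 := by
  have hf₂ : ContDiff ℝ 2 f := hf.of_le ENat.LEInfty.out
  simp only [GLgen_eq_glGenerator γ Φl Φr hn hf₂, integral_const_mul, gaussianProduct]
  rw [NESS_infinitesimally_invariant_general (fun _ _ ↦ pker_sub_comm γ _ _)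
    (hψ.isStationaryProfile hn) hf₂ hsupp, mul_zero]
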